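/- There exist effectively computable constants c > 0 and N > 0 such that for all integers n > N and all integers l with 2 ≤ l ≤ n/(10·log n), one has a(n,l−1)² ≥ a(n,l−2)·a(n,l)·exp(n/l² − c/l²); in particular a(n,l−1)² ≥ a(n,l−2)·a(n,l) in this range for n sufficiently large. -/

import Mathlib

/-!
The summand `k = l` of `a n l`, namely `T l = (l+1)^(l+n-1) / (l+1)!`, dominates all the others.
The inner sum at `k = l - d` is the `d`-th coefficient of `exp (∑ C(n,k,i) t^i)`, and
`|C(n,k,i)| ≤ (3(k+n)²)^i` bounds it by `(12 e n²)^d ≤ n^(3d)`. On the other hand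
`T (k+1) / T k = ((k+2)/(k+1))^(k+n-1) ≥ exp ((n-1)/(k+2))`, which is at least `n^6` as long as
`k + 2 ≤ (n-1) / (6 log n)`. Hence `a n l = T l * (1 + O(n⁻²))`.

The quotients `T (k+1) / T k` are explicit, and comparing two consecutive ones gives
`T (l-1)² ≥ T (l-2) * T l * exp ((n-3)/l²)`. Passing from `T` to `a` costs a factor
`exp (-8/n²) ≥ exp (-8/l²)`, so `c = 11` works.
-/

open Finset Real

/-- The constant `C(n,k,i)` from Aluffi–Marcolli–Nascimento. -/
noncomputable def Cnki (n k i : ℕ) : ℝ :=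
  ((-1 : ℝ) ^ i * (2 * (k : ℝ) * i + n * i + k + n - 1) + (k : ℝ) - i) / (i * (i + 1))
    - (1 / ((i : ℝ) * (k + 1) ^ i)) * ∑ j ∈ Finset.range (k + n - 1), (j : ℝ) ^ i

/-- The finite set of `m`-tuples of positive integers summing to `N`. -/
def posTuples (m N : ℕ) : Finset (Fin m → ℕ) :=
  (Fintype.piFinset fun _ => Finset.Icc 1 N).filter fun f => ∑ j, f j = N

/-- `a n l = rk H^{2l}(M̄_{0,n})`, via the Aluffi–Marcolli–Nascimento formula. -/
noncomputable def a (n l : ℕ) : ℝ :=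
  ∑ k ∈ Finset.range (l + 1),
    ((k + 1 : ℝ) ^ (k + n - 1) / (Nat.factorial (k + 1) : ℝ)) *
      ∑ m ∈ Finset.range (l - k + 1),
        (1 / (Nat.factorial m : ℝ)) *
          ∑ f ∈ posTuples m (l - k), ∏ j, Cnki n k (f j)

/-! ### Coefficients of the exponential of a power series -/

/-- The coefficient of `t ^ d` in the power series `exp (∑ i ≥ 1, c i * t ^ i)`, expanded over
compositions of `d`; the value `c 0` is never used. It is the inner sum of `a`. -/
noncomputable def expCoeff (c : ℕ → ℝ) (d : ℕ) : ℝ :=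
  ∑ m ∈ range (d + 1), (1 / (m.factorial : ℝ)) * ∑ f ∈ posTuples m d, ∏ j, c (f j)

lemma card_posTuples_le (m N : ℕ) : #(posTuples m N) ≤ N ^ m :=
  (card_filter_le _ _).trans (by simp)

lemma expCoeff_zero (c : ℕ → ℝ) : expCoeff c 0 = 1 := by
  simp [expCoeff, posTuples]

lemma abs_prod_le_of_mem_posTuples {c : ℕ → ℝ} {B : ℝ} (hc : ∀ i, 1 ≤ i → |c i| ≤ B ^ i)
    {m d : ℕ} {f : Fin m → ℕ} (hf : f ∈ posTuples m d) : |∏ j, c (f j)| ≤ B ^ d := by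
  simp only [posTuples, mem_filter, Fintype.mem_piFinset, mem_Icc] at hf
  calc |∏ j, c (f j)| = ∏ j, |c (f j)| := abs_prod _ _
    _ ≤ ∏ j, B ^ f j := prod_le_prod (fun _ _ ↦ abs_nonneg _) fun j _ ↦ hc _ (hf.1 j).1
    _ = B ^ d := by rw [prod_pow_eq_pow_sum, hf.2]

lemma abs_expCoeff_le {c : ℕ → ℝ} {B : ℝ} (hc : ∀ i, 1 ≤ i → |c i| ≤ B ^ i) (d : ℕ) :
    |expCoeff c d| ≤ (exp 1 * B) ^ d := by
  have hB : 0 ≤ B := by simpa using (abs_nonneg _).trans (hc 1 le_rfl)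
  have tuples_le (m : ℕ) : |∑ f ∈ posTuples m d, ∏ j, c (f j)| ≤ (d : ℝ) ^ m * B ^ d :=
    calc |∑ f ∈ posTuples m d, ∏ j, c (f j)|
        ≤ ∑ f ∈ posTuples m d, |∏ j, c (f j)| := abs_sum_le_sum_abs _ _
      _ ≤ #(posTuples m d) • B ^ d :=
        sum_le_card_nsmul _ _ _ fun _ hf ↦ abs_prod_le_of_mem_posTuples hc hf
      _ ≤ (d : ℝ) ^ m * B ^ d := by
        rw [nsmul_eq_mul]
        gcongr
        exact_mod_cast card_posTuples_le m d
  calc |expCoeff c d|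
      ≤ ∑ m ∈ range (d + 1),
          |(1 / (m.factorial : ℝ)) * ∑ f ∈ posTuples m d, ∏ j, c (f j)| :=
        abs_sum_le_sum_abs _ _
    _ ≤ ∑ m ∈ range (d + 1), (1 / (m.factorial : ℝ)) * ((d : ℝ) ^ m * B ^ d) := by
        gcongr with m
        rw [abs_mul, abs_of_nonneg (by positivity)]
        gcongr
        exact tuples_le m
    _ = (∑ m ∈ range (d + 1), (d : ℝ) ^ m / (m.factorial : ℝ)) * B ^ d := by
        rw [sum_mul]
        exact sum_congr rfl fun _ _ ↦ by ring
    _ ≤ exp d * B ^ d := by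
        gcongr
        exact sum_le_exp_of_nonneg d.cast_nonneg _
    _ = (exp 1 * B) ^ d := by rw [mul_pow, ← exp_nat_mul, mul_one]

/-! ### The constants `C(n,k,i)` -/

lemma sum_range_pow_le (N i : ℕ) : ∑ j ∈ range N, (j : ℝ) ^ i ≤ (N : ℝ) ^ (i + 1) :=
  calc ∑ j ∈ range N, (j : ℝ) ^ i ≤ ∑ _j ∈ range N, (N : ℝ) ^ i := by
        gcongr with j hj
        exact (mem_range.1 hj).le
    _ = (N : ℝ) ^ (i + 1) := by rw [sum_const, card_range, nsmul_eq_mul, pow_succ']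

lemma abs_Cnki_rational_part_le {n i : ℕ} (hn : 1 ≤ n) (hi : 1 ≤ i) (k : ℕ) :
    |((-1 : ℝ) ^ i * (2 * (k : ℝ) * i + n * i + k + n - 1) + (k : ℝ) - i) / (i * (i + 1))|
      ≤ 2 * (k + n) := by
  have hn' : (1 : ℝ) ≤ n := by exact_mod_cast hn
  have hi' : (1 : ℝ) ≤ i := by exact_mod_cast hi
  set X : ℝ := 2 * k * i + n * i + k + n - 1 with hX
  have hX_nonneg : 0 ≤ X := by
    have : 0 ≤ 2 * (k : ℝ) * i + n * i := by positivity
    linarith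
  rw [abs_div, abs_of_pos (show (0 : ℝ) < i * (i + 1) by positivity), div_le_iff₀ (by positivity)]
  calc |(-1 : ℝ) ^ i * X + k - i|
      ≤ X + k + i := by
        rcases neg_one_pow_eq_or ℝ i with h | h <;> rw [h, abs_le] <;> constructor <;> linarith
    _ ≤ 2 * (k + n) * (1 * (i + 1)) := by
        rw [hX]
        nlinarith
    _ ≤ 2 * (k + n) * (i * (i + 1)) := by gcongr

lemma abs_Cnki_power_sum_part_le {i : ℕ} (hi : 1 ≤ i) (n k : ℕ) :
    |(1 / ((i : ℝ) * (k + 1) ^ i)) * ∑ j ∈ range (k + n - 1), (j : ℝ) ^ i|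
      ≤ ((k : ℝ) + n) ^ (i + 1) := by
  have hi' : (1 : ℝ) ≤ i := by exact_mod_cast hi
  have weight_le_one : 1 / ((i : ℝ) * (k + 1) ^ i) ≤ 1 := by
    rw [div_le_one (by positivity)]
    exact one_le_mul_of_one_le_of_one_le hi' (one_le_pow₀ (by simp))
  have sum_le : ∑ j ∈ range (k + n - 1), (j : ℝ) ^ i ≤ ((k : ℝ) + n) ^ (i + 1) := by
    refine (sum_range_pow_le _ i).trans ?_
    gcongr
    exact_mod_cast Nat.sub_le (k + n) 1
  rw [abs_of_nonneg (by positivity)]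
  exact (mul_le_of_le_one_left (by positivity) weight_le_one).trans sum_le

lemma abs_Cnki_le {n i : ℕ} (hn : 1 ≤ n) (hi : 1 ≤ i) (k : ℕ) :
    |Cnki n k i| ≤ (3 * ((k : ℝ) + n) ^ 2) ^ i := by
  set M : ℝ := k + n
  have hM : 1 ≤ M := by
    have : (1 : ℝ) ≤ n := by exact_mod_cast hn
    linarith [k.cast_nonneg (α := ℝ)]
  calc |Cnki n k i|
      ≤ 2 * M + M ^ (i + 1) := (abs_sub _ _).trans <|
        add_le_add (abs_Cnki_rational_part_le hn hi k) (abs_Cnki_power_sum_part_le hi n k)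
    _ ≤ 2 * M ^ (i + 1) + M ^ (i + 1) := by
        gcongr
        exact le_self_pow₀ hM i.succ_ne_zero
    _ = (3 * M) * M ^ i := by ring
    _ ≤ (3 * M) ^ i * M ^ i := by
        gcongr
        exact le_self_pow₀ (by linarith) (by omega)
    _ = (3 * M ^ 2) ^ i := by rw [← mul_pow]; ring

lemma abs_expCoeff_Cnki_le {n k : ℕ} (hn : 33 ≤ n) (hk : k ≤ n) (d : ℕ) :
    |expCoeff (Cnki n k) d| ≤ ((n : ℝ) ^ 3) ^ d := by
  have hn' : (33 : ℝ) ≤ n := by exact_mod_cast hn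
  have hk' : (k : ℝ) ≤ n := by exact_mod_cast hk
  refine (abs_expCoeff_le (fun i hi ↦ abs_Cnki_le (by omega) hi k) d).trans ?_
  gcongr
  calc exp 1 * (3 * ((k : ℝ) + n) ^ 2)
      ≤ 2.75 * (3 * ((n : ℝ) + n) ^ 2) := by
        gcongr
        linarith [exp_one_lt_d9]
    _ = 33 * (n : ℝ) ^ 2 := by ring
    _ ≤ n * (n : ℝ) ^ 2 := by gcongr
    _ = (n : ℝ) ^ 3 := by ring

/-! ### Growth and log-concavity of the main terms -/

/-- The summand `k = l` of `a n l`, which turns out to be the dominant one. -/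
noncomputable def mainTerm (n l : ℕ) : ℝ :=
  (l + 1 : ℝ) ^ (l + n - 1) / ((l + 1).factorial : ℝ)

lemma mainTerm_pos (n l : ℕ) : 0 < mainTerm n l := by
  unfold mainTerm
  positivity

lemma mainTerm_succ {n : ℕ} (hn : 1 ≤ n) (l : ℕ) :
    mainTerm n (l + 1) = mainTerm n l * (((l : ℝ) + 2) / (l + 1)) ^ (l + n - 1) := by
  have hexponent : l + 1 + n - 1 = (l + n - 1) + 1 := by omega
  have hbase : ((l + 1 : ℕ) : ℝ) + 1 = l + 2 := by push_cast; ring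
  unfold mainTerm
  rw [hexponent, hbase, Nat.factorial_succ (l + 1), Nat.cast_mul, Nat.cast_succ (l + 1), hbase,
    div_pow]
  field_simp
  rw [pow_succ']

lemma exp_one_div_le_div_sub_one {x : ℝ} (hx : 1 < x) : exp (1 / x) ≤ x / (x - 1) := by
  have hx1 : 0 < x - 1 := sub_pos.2 hx
  calc exp (1 / x) ≤ 1 / (1 - 1 / x) :=
        exp_bound_div_one_sub_of_interval (by positivity) ((div_lt_one (by positivity)).2 hx)
    _ = x / (x - 1) := by field_simp

lemma exp_mul_mainTerm_le_mainTerm_succ {n : ℕ} (hn : 1 ≤ n) (l : ℕ) :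
    exp (((n : ℝ) - 1) / (l + 2)) * mainTerm n l ≤ mainTerm n (l + 1) := by
  have hT := mainTerm_pos n l
  have hratio : exp (1 / ((l : ℝ) + 2)) ≤ ((l : ℝ) + 2) / (l + 1) := by
    convert exp_one_div_le_div_sub_one (x := (l : ℝ) + 2) (by linarith [l.cast_nonneg (α := ℝ)])
      using 2
    ring
  have hexponent : (n : ℝ) - 1 ≤ (l + n - 1 : ℕ) := by
    rw [Nat.cast_sub (by omega)]
    push_cast
    linarith [l.cast_nonneg (α := ℝ)]
  calc exp (((n : ℝ) - 1) / (l + 2)) * mainTerm n l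
      ≤ exp ((l + n - 1 : ℕ) * (1 / ((l : ℝ) + 2))) * mainTerm n l := by
        rw [mul_one_div]
        gcongr
    _ ≤ (((l : ℝ) + 2) / (l + 1)) ^ (l + n - 1) * mainTerm n l := by
        rw [exp_nat_mul]
        gcongr
    _ = mainTerm n (l + 1) := by rw [mainTerm_succ hn, mul_comm]

lemma exp_pow_mul_mainTerm_le {n : ℕ} (hn : 1 ≤ n) (k d : ℕ) :
    exp (((n : ℝ) - 1) / ((k + d : ℕ) + 1)) ^ d * mainTerm n k ≤ mainTerm n (k + d) := by
  refine geom_le (u := fun j ↦ mainTerm n (k + j)) (exp_nonneg _) d fun j hj ↦ ?_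
  refine le_trans ?_ (exp_mul_mainTerm_le_mainTerm_succ hn (k + j))
  have hT := (mainTerm_pos n (k + j)).le
  have hn' : 0 ≤ (n : ℝ) - 1 := sub_nonneg.2 (by exact_mod_cast hn)
  have hj' : (j : ℝ) + 1 ≤ d := by exact_mod_cast hj
  gcongr ?_ * _
  gcongr exp (_ / ?_)
  push_cast
  linarith

lemma one_add_one_div_pow_mul_exp_le {x : ℝ} (hx : 1 < x) (s : ℕ) :
    ((x + 1) / x) ^ (s + 1) * exp ((s - x) / x ^ 2) ≤ (x / (x - 1)) ^ s := by
  have hx1 : 0 < x - 1 := sub_pos.2 hx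
  have hlast : (x + 1) / x ≤ exp (1 / x) := by
    convert add_one_le_exp (1 / x) using 1
    field_simp
    ring
  have hstep : (x + 1) / x * exp (1 / x ^ 2) ≤ x / (x - 1) :=
    calc (x + 1) / x * exp (1 / x ^ 2)
        ≤ (x + 1) / x * (x ^ 2 / (x ^ 2 - 1)) := by
          gcongr
          exact exp_one_div_le_div_sub_one (by nlinarith)
      _ = x / (x - 1) := by
          rw [show x ^ 2 - 1 = (x + 1) * (x - 1) by ring]
          field_simp
  calc ((x + 1) / x) ^ (s + 1) * exp ((s - x) / x ^ 2)
      ≤ ((x + 1) / x) ^ s * exp (1 / x) * exp ((s - x) / x ^ 2) := by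
        rw [pow_succ]
        gcongr
    _ = ((x + 1) / x * exp (1 / x ^ 2)) ^ s := by
        rw [mul_pow, ← exp_nat_mul, mul_assoc, ← exp_add]
        congr 2
        field_simp
        ring
    _ ≤ (x / (x - 1)) ^ s := by gcongr

lemma mainTerm_mul_mainTerm_mul_exp_le_sq {n : ℕ} (hn : 1 ≤ n) (l : ℕ) :
    mainTerm n l * mainTerm n (l + 2) * exp (((n : ℝ) - 3) / ((l : ℝ) + 2) ^ 2)
      ≤ mainTerm n (l + 1) ^ 2 := by
  set x : ℝ := (l : ℝ) + 2 with hx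
  set s := l + n - 1 with hs
  have hT₀ := mainTerm_pos n l
  have hT₁ := mainTerm_pos n (l + 1)
  have hsx : (n : ℝ) - 3 = s - x := by
    rw [hx, hs, Nat.cast_sub (by omega)]
    push_cast
    ring
  have hT₁_eq : mainTerm n (l + 1) = mainTerm n l * (x / (x - 1)) ^ s := by
    rw [mainTerm_succ hn, show x - 1 = (l : ℝ) + 1 by rw [hx]; ring]
  have hT₂_eq : mainTerm n (l + 2) = mainTerm n (l + 1) * ((x + 1) / x) ^ (s + 1) := by
    rw [mainTerm_succ hn (l + 1), show l + 1 + n - 1 = s + 1 by omega, hx]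
    push_cast
    ring_nf
  calc mainTerm n l * mainTerm n (l + 2) * exp (((n : ℝ) - 3) / x ^ 2)
      = mainTerm n (l + 1) *
          (mainTerm n l * (((x + 1) / x) ^ (s + 1) * exp ((s - x) / x ^ 2))) := by
        rw [hT₂_eq, hsx]
        ring
    _ ≤ mainTerm n (l + 1) * (mainTerm n l * (x / (x - 1)) ^ s) := by
        gcongr
        exact one_add_one_div_pow_mul_exp_le (by linarith [l.cast_nonneg (α := ℝ)]) s
    _ = mainTerm n (l + 1) ^ 2 := by rw [← hT₁_eq, sq]

/-! ### Domination by the main term -/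

lemma a_eq_sum_mainTerm_mul_expCoeff (n l : ℕ) :
    a n l = ∑ k ∈ range (l + 1), mainTerm n k * expCoeff (Cnki n k) (l - k) :=
  rfl

lemma pow_le_exp_div_of_mul_log_le {x y z : ℝ} {m : ℕ} (hx : 0 < x) (hz : 0 < z)
    (h : m * log x * z ≤ y) : x ^ m ≤ exp (y / z) := by
  rw [← exp_log (pow_pos hx m), log_pow, exp_le_exp, le_div_iff₀ hz]
  exact h

lemma one_le_log_natCast {n : ℕ} (hn : 3 ≤ n) : 1 ≤ log n := by
  have hn' : (3 : ℝ) ≤ n := by exact_mod_cast hn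
  rw [le_log_iff_exp_le (by linarith)]
  linarith [exp_one_lt_d9]

lemma le_of_mul_log_le {n l : ℕ} (hn : 3 ≤ n) (hl : 6 * log n * (l + 1) ≤ n - 1) : l ≤ n := by
  have hlog := one_le_log_natCast hn
  have : (l : ℝ) ≤ n := by nlinarith [l.cast_nonneg (α := ℝ)]
  exact_mod_cast this

lemma abs_mainTerm_mul_expCoeff_le {n k d : ℕ} (hn : 33 ≤ n) (hd : 1 ≤ d)
    (hl : 6 * log n * ((k + d : ℕ) + 1) ≤ n - 1) :
    |mainTerm n k * expCoeff (Cnki n k) d| ≤ mainTerm n (k + d) / (n : ℝ) ^ 3 := by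
  have hn' : (33 : ℝ) ≤ n := by exact_mod_cast hn
  have hT := mainTerm_pos n k
  have hk : k ≤ n := le_self_add.trans (le_of_mul_log_le (by omega) hl)
  have hgrowth : (n : ℝ) ^ 6 ≤ exp (((n : ℝ) - 1) / ((k + d : ℕ) + 1)) :=
    pow_le_exp_div_of_mul_log_le (by linarith) (by positivity) (by exact_mod_cast hl)
  rw [abs_mul, abs_of_pos hT, le_div_iff₀ (by positivity)]
  calc mainTerm n k * |expCoeff (Cnki n k) d| * (n : ℝ) ^ 3
      ≤ mainTerm n k * ((n : ℝ) ^ 3) ^ d * ((n : ℝ) ^ 3) ^ d := by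
        gcongr
        · exact abs_expCoeff_Cnki_le hn hk d
        · exact le_self_pow₀ (one_le_pow₀ (by linarith)) (by omega)
    _ = ((n : ℝ) ^ 6) ^ d * mainTerm n k := by
        rw [mul_assoc, ← mul_pow, mul_comm, ← pow_add]
    _ ≤ exp (((n : ℝ) - 1) / ((k + d : ℕ) + 1)) ^ d * mainTerm n k := by gcongr
    _ ≤ mainTerm n (k + d) := exp_pow_mul_mainTerm_le (by omega) k d

lemma abs_a_sub_mainTerm_le {n l : ℕ} (hn : 33 ≤ n) (hl : 6 * log n * (l + 1) ≤ n - 1) :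
    |a n l - mainTerm n l| ≤ mainTerm n l * (1 / (n : ℝ) ^ 2) := by
  have hln := le_of_mul_log_le (by omega) hl
  have hT := mainTerm_pos n l
  have hsplit : a n l - mainTerm n l =
      ∑ k ∈ range l, mainTerm n k * expCoeff (Cnki n k) (l - k) := by
    rw [a_eq_sum_mainTerm_mul_expCoeff, sum_range_succ, Nat.sub_self, expCoeff_zero, mul_one,
      add_sub_cancel_right]
  calc |a n l - mainTerm n l|
      ≤ ∑ k ∈ range l, |mainTerm n k * expCoeff (Cnki n k) (l - k)| :=
        hsplit ▸ abs_sum_le_sum_abs _ _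
    _ ≤ ∑ _k ∈ range l, mainTerm n l / (n : ℝ) ^ 3 := by
        gcongr with k hk
        have hkl := mem_range.1 hk
        have hkd : k + (l - k) = l := by omega
        simpa only [hkd] using
          abs_mainTerm_mul_expCoeff_le (k := k) (d := l - k) hn (by omega) (by rwa [hkd])
    _ = l * (mainTerm n l / (n : ℝ) ^ 3) := by rw [sum_const, card_range, nsmul_eq_mul]
    _ ≤ n * (mainTerm n l / (n : ℝ) ^ 3) := by gcongr
    _ = mainTerm n l * (1 / (n : ℝ) ^ 2) := by field_simp

lemma a_nonneg {n l : ℕ} (hn : 33 ≤ n) (hl : 6 * log n * (l + 1) ≤ n - 1) : 0 ≤ a n l := by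
  have hn' : (33 : ℝ) ≤ n := by exact_mod_cast hn
  have hε : 1 / (n : ℝ) ^ 2 ≤ 1 := (div_le_one (by positivity)).2 (one_le_pow₀ (by linarith))
  have herror := (abs_le.1 (abs_a_sub_mainTerm_le hn hl)).1
  linarith [mul_le_of_le_one_right (mainTerm_pos n l).le hε]

/-! ### Log-concavity of the ranks -/

lemma one_add_mul_exp_neg_le {ε : ℝ} (h₀ : 0 ≤ ε) (h₁ : ε ≤ 1 / 2) :
    (1 + ε) * exp (-(4 * ε)) ≤ 1 - ε := by
  rw [exp_neg, ← div_eq_mul_inv, div_le_iff₀ (exp_pos _)]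
  calc 1 + ε ≤ (1 - ε) * (4 * ε + 1) := by nlinarith
    _ ≤ (1 - ε) * exp (4 * ε) := by
        gcongr
        · linarith
        · exact add_one_le_exp _

lemma mul_mul_exp_le_sq_of_relative_error {A₀ A₁ A₂ T₀ T₁ T₂ E ε : ℝ} (hε₀ : 0 ≤ ε)
    (hε : ε ≤ 1 / 2) (hA₂ : 0 ≤ A₂) (hT₀ : 0 ≤ T₀) (hT₁ : 0 ≤ T₁) (hE : 0 ≤ E)
    (h₀ : |A₀ - T₀| ≤ T₀ * ε) (h₁ : |A₁ - T₁| ≤ T₁ * ε) (h₂ : |A₂ - T₂| ≤ T₂ * ε)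
    (hT : T₀ * T₂ * E ≤ T₁ ^ 2) :
    A₀ * A₂ * (E * exp (-(8 * ε))) ≤ A₁ ^ 2 := by
  rw [abs_le] at h₀ h₁ h₂
  calc A₀ * A₂ * (E * exp (-(8 * ε)))
      ≤ (T₀ * (1 + ε)) * (T₂ * (1 + ε)) * (E * exp (-(8 * ε))) := by
        gcongr <;> linarith
    _ = T₀ * T₂ * E * ((1 + ε) * exp (-(4 * ε))) ^ 2 := by
        rw [mul_pow, ← exp_nat_mul]
        ring_nf
    _ ≤ T₁ ^ 2 * (1 - ε) ^ 2 := by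
        gcongr
        exact one_add_mul_exp_neg_le hε₀ hε
    _ = (T₁ * (1 - ε)) ^ 2 := by ring
    _ ≤ A₁ ^ 2 := by
        have : 0 ≤ T₁ * (1 - ε) := mul_nonneg hT₁ (by linarith)
        gcongr
        linarith

theorem a_mul_a_mul_exp_le_sq {n l : ℕ} (hn : 33 ≤ n)
    (hl : 6 * log n * ((l + 2 : ℕ) + 1) ≤ n - 1) :
    a n l * a n (l + 2) * exp (((n : ℝ) - 11) / ((l : ℝ) + 2) ^ 2) ≤ a n (l + 1) ^ 2 := by
  have hn' : (33 : ℝ) ≤ n := by exact_mod_cast hn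
  have hlog := one_le_log_natCast (n := n) (by omega)
  have hrange {j : ℕ} (hj : j ≤ l + 2) : 6 * log n * ((j : ℝ) + 1) ≤ n - 1 := by
    refine le_trans ?_ hl
    gcongr
  have herror {j : ℕ} (hj : j ≤ l + 2) := abs_a_sub_mainTerm_le hn (hrange hj)
  have hln : (l : ℝ) + 2 ≤ n := by exact_mod_cast le_of_mul_log_le (by omega) hl
  have hε : 1 / (n : ℝ) ^ 2 ≤ 1 / 2 := by
    gcongr
    nlinarith
  have hexp : exp (((n : ℝ) - 11) / ((l : ℝ) + 2) ^ 2) ≤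
      exp (((n : ℝ) - 3) / ((l : ℝ) + 2) ^ 2) * exp (-(8 * (1 / (n : ℝ) ^ 2))) := by
    have : 8 * (1 / (n : ℝ) ^ 2) ≤ 8 * (1 / ((l : ℝ) + 2) ^ 2) := by gcongr
    rw [← exp_add, exp_le_exp]
    calc ((n : ℝ) - 11) / ((l : ℝ) + 2) ^ 2
        = ((n : ℝ) - 3) / ((l : ℝ) + 2) ^ 2 - 8 * (1 / ((l : ℝ) + 2) ^ 2) := by ring
      _ ≤ ((n : ℝ) - 3) / ((l : ℝ) + 2) ^ 2 + -(8 * (1 / (n : ℝ) ^ 2)) := by linarith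
  have ha : 0 ≤ a n l * a n (l + 2) :=
    mul_nonneg (a_nonneg hn (hrange (by omega))) (a_nonneg hn hl)
  exact (mul_le_mul_of_nonneg_left hexp ha).trans <|
    mul_mul_exp_le_sq_of_relative_error (by positivity) hε (a_nonneg hn hl) (mainTerm_pos n l).le
      (mainTerm_pos n (l + 1)).le (exp_nonneg _) (herror (by omega)) (herror (by omega))
      (herror le_rfl) (mainTerm_mul_mainTerm_mul_exp_le_sq (by omega) l)

lemma mul_log_le_of_le_div_log {n l : ℕ} (hn : 10 ≤ n) (hl₂ : 2 ≤ l)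
    (hl : (l : ℝ) ≤ n / (10 * log n)) : 6 * log n * (l + 1) ≤ n - 1 := by
  have hn' : (10 : ℝ) ≤ n := by exact_mod_cast hn
  have hl₂' : (2 : ℝ) ≤ l := by exact_mod_cast hl₂
  have hlog := one_le_log_natCast (n := n) (by omega)
  rw [le_div_iff₀ (by positivity)] at hl
  calc 6 * log n * ((l : ℝ) + 1) ≤ 6 * log n * (l + l / 2) := by
        gcongr
        linarith
    _ = 9 / 10 * (l * (10 * log n)) := by ring
    _ ≤ n - 1 := by linarith

/-- **Theorem.** There are effectively computable constants `c > 0` and `N > 0`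
such that for all integers `n > N` and `2 ≤ l ≤ n/(10 log n)`,
`a(n,l−1)² ≥ a(n,l−2)·a(n,l)·exp(n/l² − c/l²)`; in particular
`a(n,l−1)² ≥ a(n,l−2)·a(n,l)` in this range for `n` sufficiently large. -/
theorem stmt14 :
    ∃ c : ℝ, 0 < c ∧ ∃ N : ℕ, 0 < N ∧ ∀ n l : ℕ, N < n → 2 ≤ l →
      (l : ℝ) ≤ (n : ℝ) / (10 * Real.log n) →
      a n (l - 1) ^ 2 ≥
          a n (l - 2) * a n l *
            Real.exp ((n : ℝ) / (l : ℝ) ^ 2 - c / (l : ℝ) ^ 2) ∧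
        a n (l - 1) ^ 2 ≥ a n (l - 2) * a n l := by
  refine ⟨11, by norm_num, 32, by norm_num, fun n l hn hl₂ hl ↦ ?_⟩
  have hrange := mul_log_le_of_le_div_log (by omega) hl₂ hl
  obtain ⟨p, rfl⟩ : ∃ p, l = p + 2 := ⟨l - 2, by omega⟩
  have hn' : (32 : ℝ) < n := by exact_mod_cast hn
  have hmain : a n p * a n (p + 2) *
      exp ((n : ℝ) / ((p + 2 : ℕ) : ℝ) ^ 2 - 11 / ((p + 2 : ℕ) : ℝ) ^ 2) ≤ a n (p + 1) ^ 2 := by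
    simpa only [← sub_div, Nat.cast_add, Nat.cast_ofNat] using a_mul_a_mul_exp_le_sq hn hrange
  have hrange' : 6 * log n * ((p : ℝ) + 1) ≤ n - 1 := le_trans (by gcongr; simp) hrange
  have hprod : 0 ≤ a n p * a n (p + 2) := mul_nonneg (a_nonneg hn hrange') (a_nonneg hn hrange)
  refine ⟨hmain, (le_mul_of_one_le_right hprod ?_).trans hmain⟩
  rw [one_le_exp_iff, ← sub_div]
  exact div_nonneg (by linarith) (by positivity)
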